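/- Let A be an IFA over a finite alphabet Σ with n states. Then there exists a weighted automaton A' over the two-element field ZMod 2 with at most n states such that for every word w ∈ Σ*: L_{A'}(w) = 1 in ZMod 2 if and only if L_A(w) = 1 in ℚ; i.e., the mod-2 multiplicity automaton A' accepts exactly the language L(A). -/

import Mathlib

open Matrix

/-- An `F`-weighted automaton over the alphabet `A`: a finite state set `Q`,
transition matrices `M a`, an initial row vector `init`, and a final column vector `fin`. -/
structure WAut (A : Type*) (F : Type*) [Semiring F] where
  Q : Type
  [fintypeQ : Fintype Q]
  [decEqQ : DecidableEq Q]
  M : A → Matrix Q Q F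
  init : Q → F
  fin : Q → F

attribute [instance] WAut.fintypeQ WAut.decEqQ

/-- The value `L_W(w) = α · M(w) · η` of the weighted automaton `W` on the word `w`. -/
def WAut.val {A F : Type*} [Semiring F] (W : WAut A F) (w : List A) : F :=
  W.init ⬝ᵥ ((w.map W.M).prod *ᵥ W.fin)

/-- The number of states of a weighted automaton. -/
def WAut.card {A F : Type*} [Semiring F] (W : WAut A F) : ℕ := Fintype.card W.Q

/-- An image-binary finite automaton (IFA): a `ℚ`-weighted automaton whose value on every
word is `0` or `1`. -/
def WAut.IsIFA {A : Type*} (W : WAut A ℚ) : Prop :=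
  ∀ w : List A, W.val w = 0 ∨ W.val w = 1

/-- A family of integer-valued functions whose reductions modulo a prime are linearly
independent is linearly independent over `ℤ`. -/
theorem linearIndependent_int_of_zmod {ι X : Type*} (p : ℕ) [Fact p.Prime] (f : ι → X → ℤ)
    (h : LinearIndependent (ZMod p) (fun i x => (f i x : ZMod p))) :
    LinearIndependent ℤ f := by
  rw [linearIndependent_iff'] at h ⊢
  intro s c hc
  by_contra! hne
  obtain ⟨j, hj, hcj⟩ := hne
  obtain ⟨g, hg, hgcd⟩ := s.extract_gcd c ⟨j, hj⟩
  have hd : s.gcd c ≠ 0 := fun h0 => hcj (Finset.gcd_eq_zero_iff.mp h0 j hj)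
  have hsum (x : X) : ∑ i ∈ s, g i * f i x = 0 := by
    have := congrFun hc x
    simp only [Finset.sum_apply, Pi.smul_apply, smul_eq_mul, Pi.zero_apply] at this
    refine (mul_eq_zero.mp ?_).resolve_left hd
    rw [Finset.mul_sum, ← this]
    exact Finset.sum_congr rfl fun i hi => by rw [hg i hi, mul_assoc]
  have hmod := h s (fun i => (g i : ZMod p)) <| by
    ext x
    simpa using congrArg (Int.cast : ℤ → ZMod p) (hsum x)
  have hdvd : (p : ℤ) ∣ s.gcd g :=
    Finset.dvd_gcd fun i hi => (ZMod.intCast_zmod_eq_zero_iff_dvd _ _).mp (hmod i hi)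
  rw [hgcd] at hdvd
  exact (Nat.prime_iff_prime_int.mp (Fact.out : p.Prime)).not_isUnit (isUnit_of_dvd_one hdvd)

/-- A family of integer-valued functions whose reductions modulo a prime are linearly
independent is linearly independent over `ℚ`. -/
theorem linearIndependent_rat_of_zmod {ι X : Type*} (p : ℕ) [Fact p.Prime] (f : ι → X → ℤ)
    (h : LinearIndependent (ZMod p) (fun i x => (f i x : ZMod p))) :
    LinearIndependent ℚ (fun i x => (f i x : ℚ)) := by
  rw [← LinearIndependent.iff_fractionRing ℤ ℚ]
  refine (linearIndependent_int_of_zmod p f h).map'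
    ((Int.castAddHom ℚ).toIntLinearMap.compLeft X) (LinearMap.ker_eq_bot.mpr ?_)
  intro a b hab
  ext x
  exact Int.cast_injective (α := ℚ) (congrFun hab x)

namespace WAut

/-- The linear map sending a row vector to the function computed by `W` started from it. -/
def valFrom {A F : Type*} [CommSemiring F] (W : WAut A F) : (W.Q → F) →ₗ[F] (List A → F) where
  toFun x w := x ⬝ᵥ ((w.map W.M).prod *ᵥ W.fin)
  map_add' x y := by ext w; simp [add_dotProduct]
  map_smul' c x := by ext w; simp [smul_dotProduct]

theorem val_append {A F : Type*} [CommSemiring F] (W : WAut A F) (u v : List A) :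
    W.val (u ++ v) = W.valFrom (W.init ᵥ* (u.map W.M).prod) v := by
  simp [val, valFrom, ← dotProduct_mulVec]

/-- A linearly independent family of left translates of the function computed by `W` has at
most as many members as `W` has states. -/
theorem finite_and_card_le_of_linearIndependent {A F ι : Type*} [Field F] (W : WAut A F)
    (u : ι → List A) (h : LinearIndependent F (fun i v => W.val (u i ++ v))) :
    Finite ι ∧ Nat.card ι ≤ W.card := by
  have h' : LinearIndependent F (fun i => W.init ᵥ* ((u i).map W.M).prod) := by
    refine LinearIndependent.of_comp W.valFrom ?_
    convert h using 2 with i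
    ext v
    exact (W.val_append _ _).symm
  have := h'.finite
  have := Fintype.ofFinite ι
  refine ⟨inferInstance, ?_⟩
  simpa [card] using h'.fintype_card_le_finrank

/-- The linear map on functions on words which precomposes with prepending the letter `a`. -/
def shift {A : Type*} (F : Type*) [Semiring F] (a : A) : (List A → F) →ₗ[F] (List A → F) :=
  LinearMap.funLeft F F (List.cons a)

/-- A function in a finite-dimensional space of functions on words closed under letter shifts
is computed by a weighted automaton with as many states as the dimension of the space. -/
theorem exists_val_eq_of_mem {A F : Type*} [Field F] (U : Submodule F (List A → F))
    [FiniteDimensional F U] (hU : ∀ a, ∀ g ∈ U, shift F a g ∈ U) (f : List A → F) (hf : f ∈ U) :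
    ∃ B : WAut A F, B.card = Module.finrank F U ∧ ∀ w, B.val w = f w := by
  let b := Module.finBasis F U
  let T (a : A) : U →ₗ[F] U := (shift F a).restrict (hU a)
  let B : WAut A F :=
    { Q := Fin (Module.finrank F U)
      M := fun a => (LinearMap.toMatrix b b (T a))ᵀ
      init := b.repr ⟨f, hf⟩
      fin := fun i => (b i : List A → F) [] }
  have key (w : List A) (g : U) :
      b.repr g ⬝ᵥ ((w.map B.M).prod *ᵥ B.fin) = (g : List A → F) w := by
    induction w generalizing g with
    | nil =>
      have := congrArg (fun h : U => (h : List A → F) []) (b.sum_repr g)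
      simp only [Submodule.coe_sum, Submodule.coe_smul, Finset.sum_apply, Pi.smul_apply,
        smul_eq_mul] at this
      rw [List.map_nil, List.prod_nil, one_mulVec]
      exact this
    | cons a w ih =>
      rw [List.map_cons, List.prod_cons, ← mulVec_mulVec, dotProduct_mulVec]
      have : b.repr g ᵥ* B.M a = b.repr (T a g) := by
        simp only [B, vecMul_transpose]
        exact LinearMap.toMatrix_mulVec_repr b b (T a) g
      rw [this, ih]
      rfl
  exact ⟨B, by simp [card, B], fun w => key w ⟨f, hf⟩⟩

end WAut

/-- For every IFA and every prime `p` there is a weighted automaton over `ZMod p` with at most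
as many states taking the value `1` on exactly the same words. -/
theorem WAut.IsIFA.exists_zmod {A : Type*} {W : WAut A ℚ} (hW : W.IsIFA) (p : ℕ)
    [Fact p.Prime] :
    ∃ B : WAut A (ZMod p), B.card ≤ W.card ∧ ∀ w : List A, B.val w = 1 ↔ W.val w = 1 := by
  classical
  let f (w : List A) : ℤ := if W.val w = 1 then 1 else 0
  have hfval (w : List A) : (f w : ℚ) = W.val w := by
    rcases hW w with h | h <;> simp [f, h]
  let t (u v : List A) : ZMod p := f (u ++ v)
  obtain ⟨s, hs, hspan, hli⟩ := exists_linearIndependent (ZMod p) (Set.range t)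
  choose u hu using fun i : s => hs i.2
  have hrat : LinearIndependent ℚ (fun i v => W.val (u i ++ v)) := by
    simp only [← hfval]
    refine linearIndependent_rat_of_zmod p (fun i v => f (u i ++ v)) ?_
    have heq : (fun (i : s) v => (f (u i ++ v) : ZMod p)) = Subtype.val := funext hu
    rw [heq]
    exact hli
  obtain ⟨hfin, hcard⟩ := W.finite_and_card_le_of_linearIndependent u hrat
  have := Fintype.ofFinite s
  have hfd : FiniteDimensional (ZMod p) (Submodule.span (ZMod p) (Set.range t)) := by
    rw [← hspan]
    exact FiniteDimensional.span_of_finite _ hfin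
  have hrank : Module.finrank (ZMod p) (Submodule.span (ZMod p) (Set.range t)) = Nat.card s := by
    rw [← hspan, finrank_span_set_eq_card hli, Set.toFinset_card, Nat.card_eq_fintype_card]
  obtain ⟨B, hB, hval⟩ := WAut.exists_val_eq_of_mem (Submodule.span (ZMod p) (Set.range t))
    (fun a => by
      change Submodule.span _ _ ≤ (Submodule.span _ _).comap (WAut.shift (ZMod p) a)
      rw [Submodule.span_le]
      rintro _ ⟨v, rfl⟩
      refine Submodule.subset_span ⟨v ++ [a], ?_⟩
      ext w
      simp [t, WAut.shift, LinearMap.funLeft_apply])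
    (t []) (Submodule.subset_span ⟨[], rfl⟩)
  refine ⟨B, by rw [hB, hrank]; exact hcard, fun w => ?_⟩
  rw [hval]
  by_cases h : W.val w = 1 <;> simp [t, f, h]

/-- **IFAs to mod-2 multiplicity automata without blowup.** For every IFA `W` with `n`
states there is a weighted automaton `B` over `ZMod 2` with at most `n` states accepting
exactly `L(W)`: for all words `w`, `L_B(w) = 1` in `ZMod 2` iff `L_W(w) = 1` in `ℚ`. -/
theorem ifa_to_mod2MA {A : Type*} (W : WAut A ℚ) (hW : W.IsIFA) :
    ∃ B : WAut A (ZMod 2), B.card ≤ W.card ∧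
      ∀ w : List A, B.val w = 1 ↔ W.val w = 1 := by
  have : Fact (Nat.Prime 2) := ⟨Nat.prime_two⟩
  exact hW.exists_zmod 2
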